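/- Assume A(iω) is invertible for every ω ∈ ℝ. Let ω̂ ∈ ℝ and set ξ̂ := ‖G(iω̂)‖ (operator norm from ℂ^{n_u} to ℂ^{n_y} with Euclidean norms, i.e. the largest singular value). Assume ξ̂ > 0, that D_ξ̂ := DᵀD − ξ̂²I is invertible, and that ω̂ is a global maximizer: ‖G(iω)‖ ≤ ξ̂ for all ω ∈ ℝ (so ξ̂ equals the H∞ norm of G, attained at ω̂). Then, with h(ω) := det H_ξ̂(iω) (a real-valued function of ω ∈ ℝ), both h(ω̂) = 0 and h′(ω̂) = 0, where h′ denotes the derivative with respect to the real variable ω. -/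

import Mathlib

open Matrix Complex

noncomputable section

variable {n nu ny m : ℕ}

/-- `D_ξ = Dᵀ D − ξ² I`. -/
def Dxi (D : Matrix (Fin ny) (Fin nu) ℝ) (ξ : ℝ) : Matrix (Fin nu) (Fin nu) ℝ :=
  Dᵀ * D - ξ ^ 2 • (1 : Matrix (Fin nu) (Fin nu) ℝ)

/-- `(Dᵀ)_ξ = D Dᵀ − ξ² I`, the matrix denoted `D_ξ^{-T}`-inverse base in the paper
(the only dimensionally consistent reading of the `(2,1)` block of `M₀`).
Note that it is invertible iff `D_ξ` is (for `ξ ≠ 0`), since `DᵀD` and `DDᵀ` have the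
same nonzero eigenvalues. -/
def DxiT (D : Matrix (Fin ny) (Fin nu) ℝ) (ξ : ℝ) : Matrix (Fin ny) (Fin ny) ℝ :=
  D * Dᵀ - ξ ^ 2 • (1 : Matrix (Fin ny) (Fin ny) ℝ)

/-- The block matrix `M₀`. -/
def Mzero (A0 : Matrix (Fin n) (Fin n) ℝ) (B : Matrix (Fin n) (Fin nu) ℝ)
    (C : Matrix (Fin ny) (Fin n) ℝ) (D : Matrix (Fin ny) (Fin nu) ℝ) (ξ : ℝ) :
    Matrix (Fin n ⊕ Fin n) (Fin n ⊕ Fin n) ℝ :=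
  fromBlocks (A0 - B * (Dxi D ξ)⁻¹ * Dᵀ * C) (-(B * (Dxi D ξ)⁻¹ * Bᵀ))
    (ξ ^ 2 • (Cᵀ * (DxiT D ξ)⁻¹ * C)) (-A0ᵀ + Cᵀ * D * (Dxi D ξ)⁻¹ * Bᵀ)

/-- The block matrix `Mᵢ` for `1 ≤ i ≤ m`. -/
def Mpos (Ai : Matrix (Fin n) (Fin n) ℝ) : Matrix (Fin n ⊕ Fin n) (Fin n ⊕ Fin n) ℝ :=
  fromBlocks Ai 0 0 0

/-- The block matrix `M₋ᵢ` for `1 ≤ i ≤ m`. -/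
def Mneg (Ai : Matrix (Fin n) (Fin n) ℝ) : Matrix (Fin n ⊕ Fin n) (Fin n ⊕ Fin n) ℝ :=
  fromBlocks 0 0 0 (-Aiᵀ)

/-- `H_ξ(λ) = λI − M₀ − Σᵢ (Mᵢ e^{−λτᵢ} + M₋ᵢ e^{λτᵢ})`. -/
def Hxi (A0 : Matrix (Fin n) (Fin n) ℝ) (A : Fin m → Matrix (Fin n) (Fin n) ℝ)
    (B : Matrix (Fin n) (Fin nu) ℝ) (C : Matrix (Fin ny) (Fin n) ℝ)
    (D : Matrix (Fin ny) (Fin nu) ℝ) (τ : Fin m → ℝ) (ξ : ℝ) (lam : ℂ) :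
    Matrix (Fin n ⊕ Fin n) (Fin n ⊕ Fin n) ℂ :=
  lam • (1 : Matrix (Fin n ⊕ Fin n) (Fin n ⊕ Fin n) ℂ)
    - (Mzero A0 B C D ξ).map Complex.ofReal
    - ∑ i : Fin m, (Complex.exp (-lam * (τ i : ℂ)) • (Mpos (A i)).map Complex.ofReal
        + Complex.exp (lam * (τ i : ℂ)) • (Mneg (A i)).map Complex.ofReal)

/-- `A(λ) = λI − A₀ − Σᵢ Aᵢ e^{−λτᵢ}`. -/
def Amat (A0 : Matrix (Fin n) (Fin n) ℝ) (A : Fin m → Matrix (Fin n) (Fin n) ℝ)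
    (τ : Fin m → ℝ) (lam : ℂ) : Matrix (Fin n) (Fin n) ℂ :=
  lam • (1 : Matrix (Fin n) (Fin n) ℂ) - A0.map Complex.ofReal
    - ∑ i : Fin m, Complex.exp (-lam * (τ i : ℂ)) • (A i).map Complex.ofReal

/-- The transfer function `G(λ) = C A(λ)⁻¹ B + D`. -/
def Gmat (A0 : Matrix (Fin n) (Fin n) ℝ) (A : Fin m → Matrix (Fin n) (Fin n) ℝ)
    (B : Matrix (Fin n) (Fin nu) ℝ) (C : Matrix (Fin ny) (Fin n) ℝ)
    (D : Matrix (Fin ny) (Fin nu) ℝ) (τ : Fin m → ℝ) (lam : ℂ) :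
    Matrix (Fin ny) (Fin nu) ℂ :=
  C.map Complex.ofReal * (Amat A0 A τ lam)⁻¹ * B.map Complex.ofReal + D.map Complex.ofReal

/-- `τ_max`, the maximum of the delays. -/
def tauMax [NeZero m] (τ : Fin m → ℝ) : ℝ :=
  Finset.univ.sup' Finset.univ_nonempty τ

/-- `λ` is an eigenvalue of the infinite-dimensional operator `L_ξ`: there is a continuously
differentiable, not identically zero function `u : [−τ_max, τ_max] → ℂ^{2n}` with
`u′(t) = λ u(t)` on the interval and `u′(0) = M₀ u(0) + Σᵢ (Mᵢ u(−τᵢ) + M₋ᵢ u(τᵢ))`. -/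
def IsEigLxi [NeZero m] (A0 : Matrix (Fin n) (Fin n) ℝ) (A : Fin m → Matrix (Fin n) (Fin n) ℝ)
    (B : Matrix (Fin n) (Fin nu) ℝ) (C : Matrix (Fin ny) (Fin n) ℝ)
    (D : Matrix (Fin ny) (Fin nu) ℝ) (τ : Fin m → ℝ) (ξ : ℝ) (lam : ℂ) : Prop :=
  ∃ u : ℝ → (Fin n ⊕ Fin n → ℂ),
    (∀ t ∈ Set.Icc (-(tauMax τ)) (tauMax τ),
      HasDerivWithinAt u (lam • u t) (Set.Icc (-(tauMax τ)) (tauMax τ)) t) ∧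
    (∃ t ∈ Set.Icc (-(tauMax τ)) (tauMax τ), u t ≠ 0) ∧
    lam • u 0 = (Mzero A0 B C D ξ).map Complex.ofReal *ᵥ u 0
      + ∑ i : Fin m, ((Mpos (A i)).map Complex.ofReal *ᵥ u (-(τ i))
          + (Mneg (A i)).map Complex.ofReal *ᵥ u (τ i))


/-- The operator norm of a complex matrix, viewed as a linear map between Euclidean spaces
(i.e. its largest singular value). -/
def l2OpNorm {a b : ℕ} (M : Matrix (Fin a) (Fin b) ℂ) : ℝ :=
  ‖LinearMap.toContinuousLinearMap (Matrix.toEuclideanLin M)‖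

section helpersNorm
open scoped Matrix.Norms.L2Operator MatrixOrder ComplexOrder

theorem aux_det_nonneg {a b : ℕ} (G : Matrix (Fin a) (Fin b) ℂ) (ξ : ℝ)
    (h : l2OpNorm G ≤ ξ) :
    0 ≤ (((ξ : ℂ) ^ 2) • (1 : Matrix (Fin b) (Fin b) ℂ) - Gᴴ * G).det := by
  have h' : ‖G‖ ≤ ξ := h
  have h0 : 0 ≤ ‖G‖ := norm_nonneg _
  have h1 : Gᴴ * G ≤ algebraMap ℝ (Matrix (Fin b) (Fin b) ℂ) ‖Gᴴ * G‖ :=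
    IsSelfAdjoint.le_algebraMap_norm_self (Matrix.isHermitian_conjTranspose_mul_self G)
  rw [l2_opNorm_conjTranspose_mul_self] at h1
  have h2 : algebraMap ℝ (Matrix (Fin b) (Fin b) ℂ) (‖G‖ * ‖G‖)
      ≤ algebraMap ℝ (Matrix (Fin b) (Fin b) ℂ) (ξ ^ 2) :=
    algebraMap_mono _ (by nlinarith)
  have h3 := h1.trans h2
  have h4 : algebraMap ℝ (Matrix (Fin b) (Fin b) ℂ) (ξ ^ 2) = ((ξ : ℂ) ^ 2) • 1 := by
    rw [Algebra.algebraMap_eq_smul_one]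
    ext i j
    simp
  rw [h4] at h3
  exact (Matrix.le_iff.mp h3).det_nonneg

theorem aux_det_zero {a b : ℕ} [NeZero b] (G : Matrix (Fin a) (Fin b) ℂ) (ξ : ℝ)
    (h : ξ = l2OpNorm G) :
    (((ξ : ℂ) ^ 2) • (1 : Matrix (Fin b) (Fin b) ℂ) - Gᴴ * G).det = 0 := by
  have h' : ξ = ‖G‖ := h
  have h0 : 0 ≤ Gᴴ * G := (Matrix.posSemidef_conjTranspose_mul_self G).nonneg
  have h1 : ‖Gᴴ * G‖ ∈ spectrum ℝ (Gᴴ * G) := CStarAlgebra.norm_mem_spectrum_of_nonneg h0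
  rw [l2_opNorm_conjTranspose_mul_self, ← h', spectrum.mem_iff] at h1
  have h4 : algebraMap ℝ (Matrix (Fin b) (Fin b) ℂ) (ξ * ξ) = ((ξ : ℂ) ^ 2) • 1 := by
    rw [Algebra.algebraMap_eq_smul_one]
    ext i j
    simp [sq]
  rw [h4, Matrix.isUnit_iff_isUnit_det, isUnit_iff_ne_zero, not_not] at h1
  exact h1

end helpersNorm

theorem aux_det_block {N U Y : Type*} [Fintype N] [DecidableEq N] [Fintype U] [DecidableEq U]
    [Fintype Y] [DecidableEq Y]
    (A At : Matrix N N ℂ) (B : Matrix N U ℂ) (Bt : Matrix U N ℂ) (C : Matrix Y N ℂ)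
    (Ct : Matrix N Y ℂ) (D : Matrix Y U ℂ) (Dt : Matrix U Y ℂ) (R : Matrix U U ℂ) (z : ℂ)
    (hA : IsUnit A.det) (hAt : IsUnit At.det) (hR : R * (Dt * D - z • 1) = 1) :
    (fromBlocks (A + B * R * Dt * C) (B * R * Bt) (Ct * C - Ct * D * R * Dt * C)
      (-At - Ct * D * R * Bt)).det =
    A.det * (-At).det * (R.det *
      ((Bt * At⁻¹ * Ct + Dt) * (C * A⁻¹ * B + D) - z • 1).det) := by
  have hP : (fromBlocks A 0 (Ct * C) (-At)).det = A.det * (-At).det :=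
    det_fromBlocks_zero₁₂ _ _ _
  have hPu : IsUnit (fromBlocks A 0 (Ct * C) (-At)).det := by
    rw [hP, det_neg]
    exact hA.mul (((isUnit_one.neg).pow _).mul hAt)
  have hPi : (fromBlocks A 0 (Ct * C) (-At))⁻¹ =
      fromBlocks A⁻¹ 0 (At⁻¹ * Ct * C * A⁻¹) (-At⁻¹) := by
    apply inv_eq_right_inv
    rw [fromBlocks_multiply, ← fromBlocks_one]
    congr 1
    · simp [Matrix.mul_nonsing_inv _ hA]
    · simp
    · simp [Matrix.mul_assoc, Matrix.mul_nonsing_inv_cancel_left _ _ hAt]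
    · simp [Matrix.mul_nonsing_inv _ hAt]
  have hH : fromBlocks (A + B * R * Dt * C) (B * R * Bt) (Ct * C - Ct * D * R * Dt * C)
      (-At - Ct * D * R * Bt) = fromBlocks A 0 (Ct * C) (-At) +
        fromRows B (-(Ct * D)) * (R * fromCols (Dt * C) Bt) := by
    rw [mul_fromCols, fromRows_mul_fromCols, fromBlocks_add]
    congr 1 <;> simp [Matrix.mul_assoc, sub_eq_add_neg]
  rw [hH, det_add_mul _ _ hPu, hP, hPi]
  congr 1
  rw [← det_mul]
  rw [show (Bt * At⁻¹ * Ct + Dt) * (C * A⁻¹ * B + D) - z • 1 =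
    (Dt * D - z • 1) + ((Bt * At⁻¹ * Ct) * (C * A⁻¹ * B) + (Bt * At⁻¹ * Ct) * D
      + Dt * (C * A⁻¹ * B)) by simp only [Matrix.add_mul, Matrix.mul_add]; abel]
  rw [Matrix.mul_add R, hR, Matrix.mul_assoc R, Matrix.mul_assoc R, fromCols_mul_fromBlocks,
    fromCols_mul_fromRows]
  congr 2
  simp only [Matrix.add_mul, Matrix.mul_add, Matrix.mul_assoc, Matrix.mul_neg, Matrix.neg_mul,
    Matrix.mul_zero, Matrix.zero_mul]
  simp
  abel

theorem aux_S (D : Matrix (Fin ny) (Fin nu) ℝ) (ξ : ℝ) (hpos : 0 < ξ) (hD : IsUnit (Dxi D ξ)) :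
    ξ ^ 2 • (DxiT D ξ)⁻¹ = D * (Dxi D ξ)⁻¹ * Dᵀ - 1 := by
  have hdet := (Matrix.isUnit_iff_isUnit_det _).mp hD
  have hx : ξ ^ 2 ≠ 0 := by positivity
  have h1 : DxiT D ξ * D = D * Dxi D ξ := by
    simp [DxiT, Dxi, Matrix.sub_mul, Matrix.mul_sub, Matrix.mul_assoc]
  have h2 : (DxiT D ξ)⁻¹ = (ξ ^ 2)⁻¹ • (D * (Dxi D ξ)⁻¹ * Dᵀ - 1) := by
    apply inv_eq_right_inv
    rw [Matrix.mul_smul, Matrix.mul_sub, ← Matrix.mul_assoc, ← Matrix.mul_assoc, h1,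
      Matrix.mul_nonsing_inv_cancel_right _ _ hdet, Matrix.mul_one, DxiT, sub_sub_cancel,
      smul_smul, inv_mul_cancel₀ hx, one_smul]
  rw [h2, smul_smul, mul_inv_cancel₀ hx, one_smul]

theorem aux_conj (A0 : Matrix (Fin n) (Fin n) ℝ) (A : Fin m → Matrix (Fin n) (Fin n) ℝ)
    (τ : Fin m → ℝ) (ω : ℝ) :
    (Amat A0 A τ (Complex.I * ω))ᴴ = -((Complex.I * ω) • (1 : Matrix (Fin n) (Fin n) ℂ)) 
      - A0ᵀ.map Complex.ofReal
      - ∑ i : Fin m, Complex.exp ((Complex.I * ω) * (τ i : ℂ)) • (A i)ᵀ.map Complex.ofReal := by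
  have hr : ∀ M : Matrix (Fin n) (Fin n) ℝ, (M.map Complex.ofReal)ᴴ = Mᵀ.map Complex.ofReal := by
    intro M; ext i j; simp
  simp only [Amat, conjTranspose_sub, conjTranspose_sum, conjTranspose_smul, hr,
    conjTranspose_one, Complex.star_def, ← Complex.exp_conj]
  simp

theorem aux_H (A0 : Matrix (Fin n) (Fin n) ℝ) (A : Fin m → Matrix (Fin n) (Fin n) ℝ)
    (B : Matrix (Fin n) (Fin nu) ℝ) (C : Matrix (Fin ny) (Fin n) ℝ)
    (D : Matrix (Fin ny) (Fin nu) ℝ) (τ : Fin m → ℝ) (ξ : ℝ) (hpos : 0 < ξ)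
    (hD : IsUnit (Dxi D ξ)) (ω : ℝ) :
    Hxi A0 A B C D τ ξ (Complex.I * ω) =
    fromBlocks (Amat A0 A τ (Complex.I * ω) + B.map Complex.ofReal *
        (Dxi D ξ)⁻¹.map Complex.ofReal * Dᵀ.map Complex.ofReal * C.map Complex.ofReal)
      (B.map Complex.ofReal * (Dxi D ξ)⁻¹.map Complex.ofReal * Bᵀ.map Complex.ofReal)
      (Cᵀ.map Complex.ofReal * C.map Complex.ofReal - Cᵀ.map Complex.ofReal * D.map Complex.ofReal *
        (Dxi D ξ)⁻¹.map Complex.ofReal * Dᵀ.map Complex.ofReal * C.map Complex.ofReal)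
      (-(Amat A0 A τ (Complex.I * ω))ᴴ - Cᵀ.map Complex.ofReal * D.map Complex.ofReal *
        (Dxi D ξ)⁻¹.map Complex.ofReal * Bᵀ.map Complex.ofReal) := by
  have hS := aux_S D ξ hpos hD
  have h21 : ξ ^ 2 • (Cᵀ * (DxiT D ξ)⁻¹ * C) = Cᵀ * D * (Dxi D ξ)⁻¹ * Dᵀ * C - Cᵀ * C := by
    rw [← Matrix.smul_mul, ← Matrix.mul_smul, hS]
    simp [Matrix.mul_sub, Matrix.sub_mul, Matrix.mul_assoc]
  have hmul : ∀ {a b c : ℕ} (M : Matrix (Fin a) (Fin b) ℝ) (N : Matrix (Fin b) (Fin c) ℝ),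
      M.map Complex.ofReal * N.map Complex.ofReal = (M * N).map Complex.ofReal := by
    intro a b c M N
    exact (Matrix.map_mul (f := Complex.ofRealHom)).symm
  rw [aux_conj]
  simp only [hmul]
  simp only [Hxi, Mzero, h21, Amat, Mpos, Mneg]
  ext (i | i) (j | j) <;>
    simp [Matrix.sum_apply, Matrix.one_apply] <;> try ring

theorem aux_main (A0 : Matrix (Fin n) (Fin n) ℝ) (A : Fin m → Matrix (Fin n) (Fin n) ℝ)
    (B : Matrix (Fin n) (Fin nu) ℝ) (C : Matrix (Fin ny) (Fin n) ℝ)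
    (D : Matrix (Fin ny) (Fin nu) ℝ) (τ : Fin m → ℝ) (ξ : ℝ) (hpos : 0 < ξ)
    (hD : IsUnit (Dxi D ξ)) (ω : ℝ) (hA : IsUnit (Amat A0 A τ (Complex.I * ω))) :
    (Hxi A0 A B C D τ ξ (Complex.I * ω)).det =
      (((-1) ^ n * (-1) ^ nu * (Dxi D ξ)⁻¹.det : ℝ) : ℂ) *
      ((Complex.normSq (Amat A0 A τ (Complex.I * ω)).det : ℂ) *
      (((ξ : ℂ) ^ 2) • (1 : Matrix (Fin nu) (Fin nu) ℂ) -
        (Gmat A0 A B C D τ (Complex.I * ω))ᴴ * Gmat A0 A B C D τ (Complex.I * ω)).det) := by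
  have hAd := (Matrix.isUnit_iff_isUnit_det _).mp hA
  have hr : ∀ {a b : ℕ} (M : Matrix (Fin a) (Fin b) ℝ),
      (M.map Complex.ofReal)ᴴ = Mᵀ.map Complex.ofReal := by
    intro a b M; ext i j; simp
  have hG : (Gmat A0 A B C D τ (Complex.I * ω))ᴴ = Bᵀ.map Complex.ofReal *
      ((Amat A0 A τ (Complex.I * ω))ᴴ)⁻¹ * Cᵀ.map Complex.ofReal + Dᵀ.map Complex.ofReal := by
    rw [Gmat, conjTranspose_add, conjTranspose_mul, conjTranspose_mul, hr, hr, hr,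
      conjTranspose_nonsing_inv, Matrix.mul_assoc]
  have hR : (Dxi D ξ)⁻¹.map Complex.ofReal *
      (Dᵀ.map Complex.ofReal * D.map Complex.ofReal - ((ξ : ℂ) ^ 2) • 1) = 1 := by
    have h1 : Dᵀ.map Complex.ofReal * D.map Complex.ofReal
        - ((ξ : ℂ) ^ 2) • (1 : Matrix (Fin nu) (Fin nu) ℂ) = (Dxi D ξ).map Complex.ofReal := by
      rw [Dxi]
      ext i j
      simp [Matrix.mul_apply, Matrix.one_apply, apply_ite Complex.ofReal]
    rw [h1]
    have h2 := Matrix.map_mul (L := (Dxi D ξ)⁻¹) (M := Dxi D ξ) (f := Complex.ofRealHom)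
    rw [Matrix.nonsing_inv_mul _ ((Matrix.isUnit_iff_isUnit_det _).mp hD)] at h2
    refine h2.symm.trans ?_
    ext i j
    simp [Matrix.one_apply, apply_ite Complex.ofReal]
  rw [aux_H A0 A B C D τ ξ hpos hD ω, aux_det_block _ _ _ _ _ _ _ _ _ ((ξ : ℂ) ^ 2) hAd
    (by rw [det_conjTranspose]; exact hAd.star) hR, ← hG]
  have hRd : ((Dxi D ξ)⁻¹.map Complex.ofReal).det = (((Dxi D ξ)⁻¹.det : ℝ) : ℂ) :=
    (RingHom.map_det Complex.ofRealHom _).symm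
  rw [hRd, ← neg_sub, det_neg, det_neg, det_conjTranspose, Complex.normSq_eq_conj_mul_self,
    Complex.star_def]
  have hGm : Gmat A0 A B C D τ (Complex.I * ω) = C.map Complex.ofReal *
    (Amat A0 A τ (Complex.I * ω))⁻¹ * B.map Complex.ofReal + D.map Complex.ofReal := rfl
  rw [← hGm]
  simp only [Fintype.card_fin]
  push_cast
  ring

/-- if the H∞ norm `ξ̂` of `G` is positive, attained at `ω̂`, and `D_ξ̂` is
invertible, then the real-valued function `h(ω) = det H_ξ̂(iω)` satisfies `h(ω̂) = 0` and
`h′(ω̂) = 0`. -/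
theorem det_Hxi_and_deriv_vanish_at_peak [NeZero n] [NeZero nu] [NeZero ny] [NeZero m]
    (A0 : Matrix (Fin n) (Fin n) ℝ) (A : Fin m → Matrix (Fin n) (Fin n) ℝ)
    (B : Matrix (Fin n) (Fin nu) ℝ) (C : Matrix (Fin ny) (Fin n) ℝ)
    (D : Matrix (Fin ny) (Fin nu) ℝ) (τ : Fin m → ℝ) (hτ : ∀ i, 0 ≤ τ i)
    (hA : ∀ ω : ℝ, IsUnit (Amat A0 A τ (Complex.I * ω)))
    (ωhat : ℝ) (ξhat : ℝ) (hξhat : ξhat = l2OpNorm (Gmat A0 A B C D τ (Complex.I * ωhat)))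
    (hpos : 0 < ξhat) (hD : IsUnit (Dxi D ξhat))
    (hmax : ∀ ω : ℝ, l2OpNorm (Gmat A0 A B C D τ (Complex.I * ω)) ≤ ξhat) :
    (Hxi A0 A B C D τ ξhat (Complex.I * ωhat)).det = 0 ∧
      deriv (fun ω : ℝ => ((Hxi A0 A B C D τ ξhat (Complex.I * ω)).det).re) ωhat = 0 := by
  have hm := fun ω : ℝ => aux_main A0 A B C D τ ξhat hpos hD ω (hA ω)
  have hz := aux_det_zero _ _ hξhat
  refine ⟨by rw [hm, hz]; simp, ?_⟩
  simp only [hm, Complex.re_ofReal_mul]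
  rw [deriv_const_mul_field]
  rw [IsLocalMin.deriv_eq_zero, mul_zero]
  refine Filter.Eventually.of_forall fun ω => ?_
  beta_reduce
  rw [hz]
  simp only [Complex.zero_re, mul_zero]
  exact mul_nonneg (Complex.normSq_nonneg _) (Complex.nonneg_iff.mp (aux_det_nonneg _ _ (hmax ω))).1
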